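/- Let a > 1 be a real number, set f(z) = z(z²−1)(z²−a²), and define p = ∫₁^a dz/√|f(z)|, q = ∫₀¹ dz/√|f(z)|, r = −∫₁^a z·dz/√|f(z)|, s = ∫₀¹ z·dz/√|f(z)|. Let Π₀ = [[p,q],[r,s]], M = diag(1,−1), and N = [[−1,1],[1,0]] as real 2×2 matrices. Then Π₀ is invertible and Π₀⁻¹·M·Π₀·N = (1/(ps−qr))·[[2qs−pr, pr],[pr, −2pr]]. -/

import Mathlib

open MeasureTheory intervalIntegral

/-!
Write `a = k²` with `k > 1`, and `R = -r`. Expanding the product of matrices, the off-diagonal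
entries agree with the claimed ones exactly when `p s + q r = p r`. This is a relation between the
periods, and it follows from the two linear relations `R = k p` and `s = k (q - p)`.

* `R = k p` comes from the involution `z ↦ a / z` of `[1, a]` (`integral_id_mul_invSqrt`).
* `s = k (q - p)` comes from the fact that both `(z + k) dz / √|f|` on `[1, a]` and
  `(k - z) dz / √|f|` on `[0, 1]` are pulled back from the same elliptic differential
  `dw / √(((k - 1)² - w²) ((k + 1)² + w²))`, along `w = (z - k) / √z` and
  `w = (k² - 1) √z / (z + k)` respectively. The first substitution covers `[-(k - 1), k - 1]`, the
  second `[0, k - 1]`, and the differential is even (`integral_add_mul_invSqrt`,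
  `integral_sub_mul_invSqrt`, `integral_ellInt_symm`).

Invertibility holds because `p s - q r = p s + q R` and all four integrals converge and are
positive; convergence follows from that of `∫ dz / √((z - l) (h - z))`, an arcsine integral.
-/

/-- The integrand `1 / √|f z|`, with `f z = z (z² - 1) (z² - a²)` and `a = k²`. -/
noncomputable def invSqrt (k z : ℝ) : ℝ :=
  1 / Real.sqrt |z * (z ^ 2 - 1) * (z ^ 2 - (k ^ 2) ^ 2)|

/-- The elliptic integrand `1 / √(((k - 1)² - w²) ((k + 1)² + w²))`. -/
noncomputable def ellInt (k w : ℝ) : ℝ :=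
  1 / Real.sqrt (((k - 1) ^ 2 - w ^ 2) * ((k + 1) ^ 2 + w ^ 2))

/-! ### Convergence and positivity of the integrals -/

/-- The integrand is the derivative of `arcsin ((2 z - l - h) / (h - l))`. -/
lemma intervalIntegrable_arcsin {l h : ℝ} (hlh : l < h) :
    IntervalIntegrable (fun z => 1 / Real.sqrt ((z - l) * (h - z))) volume l h := by
  apply intervalIntegrable_deriv_of_nonneg
    (g := fun z => Real.arcsin ((2 * z - l - h) / (h - l)))
  · exact (Real.continuous_arcsin.comp (by fun_prop)).continuousOn
  · intro z hz
    rw [min_eq_left hlh.le, max_eq_right hlh.le] at hz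
    obtain ⟨h1, h2⟩ := hz
    have hd : 0 < h - l := by linarith
    have hu : HasDerivAt (fun z : ℝ => (2 * z - l - h) / (h - l)) (2 / (h - l)) z := by
      have := ((((hasDerivAt_id z).const_mul 2).sub_const l).sub_const h).div_const (h - l)
      simpa using this
    have hlo : (2 * z - l - h) / (h - l) ≠ -1 := by
      intro e
      rw [div_eq_iff hd.ne'] at e
      linarith
    have hhi : (2 * z - l - h) / (h - l) ≠ 1 := by
      intro e
      rw [div_eq_iff hd.ne'] at e
      linarith
    have key := (Real.hasDerivAt_arcsin hlo hhi).comp z hu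
    have e : (z - l) * (h - z) = (1 - ((2 * z - l - h) / (h - l)) ^ 2) * ((h - l) / 2) ^ 2 := by
      field_simp
      ring
    have e2 : 1 / Real.sqrt ((z - l) * (h - z))
        = 1 / Real.sqrt (1 - ((2 * z - l - h) / (h - l)) ^ 2) * (2 / (h - l)) := by
      rw [e, Real.sqrt_mul' _ (sq_nonneg _), Real.sqrt_sq (by positivity)]
      generalize Real.sqrt (1 - ((2 * z - l - h) / (h - l)) ^ 2) = x
      field_simp
    simp only [e2]
    exact key
  · intro z _
    positivity

lemma abs_quintic_left {k z : ℝ} (hk : 1 < k) (h0 : 0 ≤ z) (h1 : z ≤ 1) :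
    |z * (z ^ 2 - 1) * (z ^ 2 - (k ^ 2) ^ 2)| = z * (1 - z ^ 2) * ((k ^ 2) ^ 2 - z ^ 2) := by
  have hk2 : 1 < k ^ 2 := by nlinarith
  have : 0 ≤ z * (1 - z ^ 2) * ((k ^ 2) ^ 2 - z ^ 2) := by
    apply mul_nonneg (mul_nonneg h0 _) _ <;> nlinarith
  rw [← abs_of_nonneg this]
  congr 1
  ring

lemma abs_quintic_right {k z : ℝ} (h1 : 1 ≤ z) (h2 : z ≤ k ^ 2) :
    |z * (z ^ 2 - 1) * (z ^ 2 - (k ^ 2) ^ 2)| = z * (z ^ 2 - 1) * ((k ^ 2) ^ 2 - z ^ 2) := by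
  have : 0 ≤ z * (z ^ 2 - 1) * ((k ^ 2) ^ 2 - z ^ 2) := by
    apply mul_nonneg (mul_nonneg (by linarith) _) _ <;> nlinarith
  rw [← abs_of_nonneg this, ← abs_neg]
  congr 1
  ring

lemma invSqrt_pos_left {k z : ℝ} (hk : 1 < k) (h0 : 0 < z) (h1 : z < 1) : 0 < invSqrt k z := by
  have hk2 : 1 < k ^ 2 := by nlinarith
  rw [invSqrt, abs_quintic_left hk h0.le h1.le]
  have : 0 < 1 - z ^ 2 := by nlinarith
  have : 0 < (k ^ 2) ^ 2 - z ^ 2 := by nlinarith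
  positivity

lemma invSqrt_pos_right {k z : ℝ} (h1 : 1 < z) (h2 : z < k ^ 2) : 0 < invSqrt k z := by
  rw [invSqrt, abs_quintic_right h1.le h2.le]
  have : 0 < z ^ 2 - 1 := by nlinarith
  have : 0 < (k ^ 2) ^ 2 - z ^ 2 := by nlinarith
  positivity

lemma intervalIntegrable_invSqrt_left {k : ℝ} (hk : 1 < k) :
    IntervalIntegrable (invSqrt k) volume 0 1 := by
  have hk2 : 1 < k ^ 2 := by nlinarith
  have hc : ContinuousOn (fun z : ℝ => 1 / Real.sqrt ((1 + z) * ((k ^ 2) ^ 2 - z ^ 2)))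
      (Set.uIcc 0 1) := by
    apply ContinuousOn.div (by fun_prop) (by fun_prop)
    intro z hz
    rw [Set.uIcc_of_le zero_le_one] at hz
    have h1 : 0 < 1 + z := by linarith [hz.1]
    have h2 : 0 < (k ^ 2) ^ 2 - z ^ 2 := by nlinarith [hz.1, hz.2]
    positivity
  refine ((intervalIntegrable_arcsin zero_lt_one).mul_continuousOn hc).congr ?_
  intro z hz
  rw [Set.uIoc_of_le zero_le_one] at hz
  have h1 : 0 ≤ (z - 0) * (1 - z) := mul_nonneg (by linarith [hz.1]) (by linarith [hz.2])
  simp only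
  rw [invSqrt, abs_quintic_left hk hz.1.le hz.2, div_mul_div_comm, ← Real.sqrt_mul h1, one_mul]
  congr 2
  ring

lemma intervalIntegrable_invSqrt_right {k : ℝ} (hk : 1 < k) :
    IntervalIntegrable (invSqrt k) volume 1 (k ^ 2) := by
  have hk2 : 1 < k ^ 2 := by nlinarith
  have hc : ContinuousOn (fun z : ℝ => 1 / Real.sqrt (z * (z + 1) * (z + k ^ 2)))
      (Set.uIcc 1 (k ^ 2)) := by
    apply ContinuousOn.div (by fun_prop) (by fun_prop)
    intro z hz
    rw [Set.uIcc_of_le hk2.le] at hz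
    have h1 : 0 < z := by linarith [hz.1]
    positivity
  refine ((intervalIntegrable_arcsin hk2).mul_continuousOn hc).congr ?_
  intro z hz
  rw [Set.uIoc_of_le hk2.le] at hz
  have h1 : 0 ≤ (z - 1) * (k ^ 2 - z) := mul_nonneg (by linarith [hz.1]) (by linarith [hz.2])
  simp only
  rw [invSqrt, abs_quintic_right hz.1.le hz.2, div_mul_div_comm, ← Real.sqrt_mul h1, one_mul]
  congr 2
  ring

lemma intervalIntegrable_ellInt {k : ℝ} (hk : 1 < k) :
    IntervalIntegrable (ellInt k) volume (-(k - 1)) (k - 1) := by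
  have hc : ContinuousOn (fun w : ℝ => 1 / Real.sqrt ((k + 1) ^ 2 + w ^ 2))
      (Set.uIcc (-(k - 1)) (k - 1)) := by
    apply ContinuousOn.div (by fun_prop) (by fun_prop)
    intro w _
    have : 0 < k + 1 := by linarith
    positivity
  have hlt : -(k - 1) < k - 1 := by linarith
  refine ((intervalIntegrable_arcsin hlt).mul_continuousOn hc).congr ?_
  intro w hw
  rw [Set.uIoc_of_le hlt.le] at hw
  have h1 : 0 ≤ (w - -(k - 1)) * (k - 1 - w) :=
    mul_nonneg (by linarith [hw.1]) (by linarith [hw.2])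
  simp only
  rw [ellInt, div_mul_div_comm, ← Real.sqrt_mul h1, one_mul]
  congr 2
  ring

/-! ### Changes of variables -/

lemma integral_ellInt_symm {k : ℝ} (hk : 1 < k) :
    ∫ w in (-(k - 1))..(k - 1), ellInt k w = 2 * ∫ w in (0 : ℝ)..(k - 1), ellInt k w := by
  have hi := intervalIntegrable_ellInt hk
  have h0 : (0 : ℝ) ∈ Set.uIcc (-(k - 1)) (k - 1) := by
    rw [Set.uIcc_of_le (by linarith)]
    constructor <;> linarith
  have hl := hi.mono_set (Set.uIcc_subset_uIcc Set.left_mem_uIcc h0)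
  have hr := hi.mono_set (Set.uIcc_subset_uIcc h0 Set.right_mem_uIcc)
  have e : ∫ w in (-(k - 1))..0, ellInt k w = ∫ w in (0 : ℝ)..(k - 1), ellInt k w := by
    have := integral_comp_neg (ellInt k) (a := 0) (b := k - 1)
    rw [neg_zero] at this
    rw [← this]
    simp [ellInt]
  rw [← integral_add_adjacent_intervals hl hr, e, two_mul]

/-- The involution `z ↦ a / z` multiplies `|f|` by `a³ / z⁶`, hence exchanges `z dz / √|f|` and
`√a dz / √|f|` up to orientation. -/
lemma integral_id_mul_invSqrt {k : ℝ} (hk : 1 < k) :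
    ∫ z in (1 : ℝ)..k ^ 2, z * invSqrt k z = k * ∫ z in (1 : ℝ)..k ^ 2, invSqrt k z := by
  have hk2 : 1 < k ^ 2 := by nlinarith
  have hk0 : 0 < k := by linarith
  have key := integral_comp_mul_deriv_of_deriv_nonpos (a := 1) (b := k ^ 2)
    (f := fun z => k ^ 2 / z) (f' := fun z => -(k ^ 2 / z ^ 2)) (g := invSqrt k) ?_ ?_ ?_
  · simp only [div_one, div_self (show k ^ 2 ≠ 0 by positivity), Function.comp_apply] at key
    rw [integral_symm 1 (k ^ 2), ← neg_eq_iff_eq_neg, ← intervalIntegral.integral_neg] at key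
    rw [← key, ← intervalIntegral.integral_const_mul]
    apply integral_congr_Ioo_of_le hk2.le
    rintro z ⟨h1, h2⟩
    have hz : 0 < z := by linarith
    have e : |z * (z ^ 2 - 1) * (z ^ 2 - (k ^ 2) ^ 2)| =
        |k ^ 2 / z * ((k ^ 2 / z) ^ 2 - 1) * ((k ^ 2 / z) ^ 2 - (k ^ 2) ^ 2)|
          * (z ^ 3 / k ^ 3) ^ 2 := by
      rw [← abs_of_nonneg (sq_nonneg (z ^ 3 / k ^ 3)), ← abs_mul]
      congr 1
      field_simp
      ring
    simp only [invSqrt]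
    rw [e, Real.sqrt_mul' _ (sq_nonneg _), Real.sqrt_sq (by positivity), ← div_div]
    field_simp
  · intro z hz
    rw [Set.uIcc_of_le hk2.le] at hz
    exact (continuousAt_const.div continuousAt_id
      (by simpa using (by linarith [hz.1] : z ≠ 0))).continuousWithinAt
  · intro z hz
    rw [min_eq_left hk2.le] at hz
    have hz0 : z ≠ 0 := by linarith [hz.1]
    have := (hasDerivAt_inv hz0).const_mul (k ^ 2)
    simpa [div_eq_mul_inv] using this
  · intro z _
    have : 0 ≤ k ^ 2 / z ^ 2 := by positivity
    linarith

/-- Substitution `w = (z - k) / √z`, increasing from `-(k - 1)` to `k - 1` on `[1, k²]`. -/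
lemma integral_add_mul_invSqrt {k : ℝ} (hk : 1 < k) :
    ∫ z in (1 : ℝ)..k ^ 2, (z + k) / 2 * invSqrt k z =
      ∫ w in (-(k - 1))..(k - 1), ellInt k w := by
  have hk2 : 1 < k ^ 2 := by nlinarith
  have hk0 : 0 < k := by linarith
  have key := integral_comp_mul_deriv_of_deriv_nonneg (a := 1) (b := k ^ 2)
    (f := fun z => (z - k) / Real.sqrt z)
    (f' := fun z => (z + k) / (2 * Real.sqrt z ^ 3)) (g := ellInt k) ?_ ?_ ?_
  · have e1 : (1 - k) / Real.sqrt 1 = -(k - 1) := by simp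
    have e2 : (k ^ 2 - k) / Real.sqrt (k ^ 2) = k - 1 := by
      rw [Real.sqrt_sq hk0.le]
      field_simp
    simp only [e1, e2, Function.comp_apply] at key
    rw [← key]
    apply integral_congr_Ioo_of_le hk2.le
    rintro z ⟨h1, h2⟩
    have hz : 0 < z := by linarith
    simp only [ellInt]
    rw [invSqrt, abs_quintic_right h1.le h2.le]
    obtain ⟨t, ht, rfl⟩ : ∃ t : ℝ, 0 < t ∧ z = t ^ 2 :=
      ⟨Real.sqrt z, Real.sqrt_pos.2 hz, (Real.sq_sqrt hz.le).symm⟩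
    rw [Real.sqrt_sq ht.le]
    have e : t ^ 2 * ((t ^ 2) ^ 2 - 1) * ((k ^ 2) ^ 2 - (t ^ 2) ^ 2) =
        ((k - 1) ^ 2 - ((t ^ 2 - k) / t) ^ 2) * ((k + 1) ^ 2 + ((t ^ 2 - k) / t) ^ 2)
          * (t ^ 3) ^ 2 := by
      field_simp
      ring
    rw [e, Real.sqrt_mul' _ (sq_nonneg _), Real.sqrt_sq (by positivity), ← div_div]
    field_simp
  · intro z hz
    rw [Set.uIcc_of_le hk2.le] at hz
    have : Real.sqrt z ≠ 0 := (Real.sqrt_pos.2 (by linarith [hz.1])).ne'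
    apply ContinuousAt.continuousWithinAt
    fun_prop (disch := assumption)
  · intro z hz
    rw [min_eq_left hk2.le] at hz
    have hz0 : 0 < z := by linarith [hz.1]
    have hs : 0 < Real.sqrt z := Real.sqrt_pos.2 hz0
    have := ((hasDerivAt_id z).sub_const k).div (Real.hasDerivAt_sqrt hz0.ne') hs.ne'
    refine HasDerivAt.congr_deriv this ?_
    simp only [id]
    have e : z = Real.sqrt z ^ 2 := (Real.sq_sqrt hz0.le).symm
    generalize Real.sqrt z = t at *
    subst e
    field_simp
    ring
  · intro z hz
    rw [min_eq_left hk2.le] at hz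
    have hz0 : 0 < z := by linarith [hz.1]
    positivity

/-- Substitution `w = (k² - 1) √z / (z + k)`, increasing from `0` to `k - 1` on `[0, 1]`. -/
lemma integral_sub_mul_invSqrt {k : ℝ} (hk : 1 < k) :
    ∫ z in (0 : ℝ)..1, (k - z) / 2 * invSqrt k z = ∫ w in (0 : ℝ)..(k - 1), ellInt k w := by
  have hk2 : 0 < k ^ 2 - 1 := by nlinarith
  have hk0 : 0 < k := by linarith
  have key := integral_comp_mul_deriv_of_deriv_nonneg (a := 0) (b := 1)
    (f := fun z => (k ^ 2 - 1) * Real.sqrt z / (z + k))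
    (f' := fun z => (k ^ 2 - 1) * (k - z) / (2 * Real.sqrt z * (z + k) ^ 2))
    (g := ellInt k) ?_ ?_ ?_
  · have e1 : (k ^ 2 - 1) * Real.sqrt 0 / (0 + k) = 0 := by simp
    have e2 : (k ^ 2 - 1) * Real.sqrt 1 / (1 + k) = k - 1 := by
      rw [Real.sqrt_one]
      field_simp
      ring
    simp only [e1, e2, Function.comp_apply] at key
    rw [← key]
    apply integral_congr_Ioo_of_le zero_le_one
    rintro z ⟨h1, h2⟩
    simp only [ellInt]
    rw [invSqrt, abs_quintic_left hk h1.le h2.le]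
    obtain ⟨t, ht, rfl⟩ : ∃ t : ℝ, 0 < t ∧ z = t ^ 2 :=
      ⟨Real.sqrt z, Real.sqrt_pos.2 h1, (Real.sq_sqrt h1.le).symm⟩
    rw [Real.sqrt_sq ht.le]
    have e : t ^ 2 * (1 - (t ^ 2) ^ 2) * ((k ^ 2) ^ 2 - (t ^ 2) ^ 2) =
        ((k - 1) ^ 2 - ((k ^ 2 - 1) * t / (t ^ 2 + k)) ^ 2) *
          ((k + 1) ^ 2 + ((k ^ 2 - 1) * t / (t ^ 2 + k)) ^ 2)
          * ((t ^ 2 + k) ^ 2 * t / (k ^ 2 - 1)) ^ 2 := by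
      field_simp
      ring
    rw [e, Real.sqrt_mul' _ (sq_nonneg _), Real.sqrt_sq (by positivity), ← div_div]
    field_simp
  · intro z hz
    rw [Set.uIcc_of_le zero_le_one] at hz
    have : z + k ≠ 0 := by linarith [hz.1]
    apply ContinuousAt.continuousWithinAt
    fun_prop (disch := assumption)
  · intro z hz
    rw [min_eq_left zero_le_one] at hz
    have hz0 : 0 < z := hz.1
    have hs : 0 < Real.sqrt z := Real.sqrt_pos.2 hz0
    have hzk : z + k ≠ 0 := by linarith
    have := ((Real.hasDerivAt_sqrt hz0.ne').const_mul (k ^ 2 - 1)).div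
      ((hasDerivAt_id z).add_const k) hzk
    refine HasDerivAt.congr_deriv this ?_
    simp only [id]
    have e : z = Real.sqrt z ^ 2 := (Real.sq_sqrt hz0.le).symm
    generalize Real.sqrt z = t at *
    subst e
    field_simp
    ring
  · intro z hz
    rw [min_eq_left zero_le_one, max_eq_right zero_le_one] at hz
    have h1 : 0 < z := hz.1
    have h2 : 0 < k - z := by linarith [hz.2]
    positivity

/-! ### Relations between the periods and the matrix identity -/

/-- The second linear relation between the periods, `s = √a (q - p)`. -/
lemma integral_id_mul_invSqrt_left {k : ℝ} (hk : 1 < k) :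
    ∫ z in (0 : ℝ)..1, z * invSqrt k z =
      k * ((∫ z in (0 : ℝ)..1, invSqrt k z) - ∫ z in (1 : ℝ)..k ^ 2, invSqrt k z) := by
  have hl := intervalIntegrable_invSqrt_left hk
  have hr := intervalIntegrable_invSqrt_right hk
  have hl' : IntervalIntegrable (fun z => z * invSqrt k z) volume 0 1 :=
    hl.continuousOn_mul continuousOn_id
  have hr' : IntervalIntegrable (fun z => z * invSqrt k z) volume 1 (k ^ 2) :=
    hr.continuousOn_mul continuousOn_id
  have eR : ∫ z in (1 : ℝ)..k ^ 2, (z + k) / 2 * invSqrt k z =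
      ((∫ z in (1 : ℝ)..k ^ 2, z * invSqrt k z) +
        k * ∫ z in (1 : ℝ)..k ^ 2, invSqrt k z) / 2 := by
    rw [← intervalIntegral.integral_const_mul, ← integral_add hr' (hr.const_mul k),
      ← intervalIntegral.integral_div]
    congr 1
    ext z
    ring
  have eL : ∫ z in (0 : ℝ)..1, (k - z) / 2 * invSqrt k z =
      (k * (∫ z in (0 : ℝ)..1, invSqrt k z) - ∫ z in (0 : ℝ)..1, z * invSqrt k z) / 2 := by
    rw [← intervalIntegral.integral_const_mul, ← integral_sub (hl.const_mul k) hl',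
      ← intervalIntegral.integral_div]
    congr 1
    ext z
    ring
  have h1 := integral_add_mul_invSqrt hk
  have h2 := integral_sub_mul_invSqrt hk
  rw [integral_ellInt_symm hk, ← h2, eR, eL, integral_id_mul_invSqrt hk] at h1
  linarith

/-- For `a > 1` and `f z = z (z² - 1)(z² - a²)`, with period integrals `p, q, r, s`,
the matrix `Pi0 = [[p, q], [r, s]]` is invertible and
`Pi0⁻¹ ⬝ M ⬝ Pi0 ⬝ N = (1/(ps - qr)) • [[2qs - pr, pr], [pr, -2pr]]`
where `M = diag(1, -1)` and `N = [[-1, 1], [1, 0]]`. -/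
theorem stmt_4 (a : ℝ) (ha : 1 < a) :
    let f : ℝ → ℝ := fun z => z * (z ^ 2 - 1) * (z ^ 2 - a ^ 2)
    let p : ℝ := ∫ z in (1 : ℝ)..a, 1 / Real.sqrt |f z|
    let q : ℝ := ∫ z in (0 : ℝ)..1, 1 / Real.sqrt |f z|
    let r : ℝ := -∫ z in (1 : ℝ)..a, z / Real.sqrt |f z|
    let s : ℝ := ∫ z in (0 : ℝ)..1, z / Real.sqrt |f z|
    let Pi0 : Matrix (Fin 2) (Fin 2) ℝ := !![p, q; r, s]
    let M : Matrix (Fin 2) (Fin 2) ℝ := !![1, 0; 0, -1]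
    let N : Matrix (Fin 2) (Fin 2) ℝ := !![-1, 1; 1, 0]
    IsUnit Pi0.det ∧
      Pi0⁻¹ * M * Pi0 * N =
        (1 / (p * s - q * r)) •
          !![2 * q * s - p * r, p * r; p * r, -2 * p * r] := by
  intro f p q r s Pi0 M N
  obtain ⟨k, hk, rfl⟩ : ∃ k : ℝ, 1 < k ∧ a = k ^ 2 :=
    ⟨Real.sqrt a, by rwa [Real.lt_sqrt zero_le_one, one_pow], (Real.sq_sqrt (by linarith)).symm⟩
  have hr : r = -(k * p) := by
    have h := integral_id_mul_invSqrt hk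
    simp only [invSqrt, mul_one_div] at h
    exact congrArg Neg.neg h
  have hs : s = k * (q - p) := by
    have h := integral_id_mul_invSqrt_left hk
    simp only [invSqrt, mul_one_div] at h
    exact h
  have hp : 0 < p := intervalIntegral_pos_of_pos_on (intervalIntegrable_invSqrt_right hk)
    (fun z hz => invSqrt_pos_right hz.1 hz.2) ha
  have hq : 0 < q := intervalIntegral_pos_of_pos_on (intervalIntegrable_invSqrt_left hk)
    (fun z hz => invSqrt_pos_left hk hz.1 hz.2) zero_lt_one
  have hs0 : 0 < s := by
    have h : 0 < ∫ z in (0 : ℝ)..1, z * invSqrt k z := intervalIntegral_pos_of_pos_on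
      ((intervalIntegrable_invSqrt_left hk).continuousOn_mul continuousOn_id)
      (fun z hz => mul_pos hz.1 (invSqrt_pos_left hk hz.1 hz.2)) zero_lt_one
    simp only [invSqrt, mul_one_div] at h
    exact h
  have hD : 0 < p * s - q * r := by
    have : 0 < q * (k * p) := by positivity
    rw [hr]
    nlinarith [mul_pos hp hs0]
  have hrel : p * s + q * r = p * r := by
    rw [hr, hs]
    ring
  clear_value p q r s
  have hdet : Pi0.det = p * s - q * r := by simp [Pi0, Matrix.det_fin_two]
  refine ⟨by rw [hdet]; exact hD.ne'.isUnit, ?_⟩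
  rw [Matrix.inv_def, hdet, Ring.inverse_eq_inv', Matrix.smul_mul, Matrix.smul_mul,
    Matrix.smul_mul, one_div]
  congr 1
  simp only [Pi0, M, N, Matrix.adjugate_fin_two_of]
  ext i j
  fin_cases i <;> fin_cases j <;> simp [Matrix.mul_apply, Fin.sum_univ_two] <;> linarith
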